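/- Let ℓ ≥ 1, let M ∈ ℝ^{(ℓ+1)×(ℓ+1)} be a matrix with all entries nonnegative, let λ ∈ ℝ, and let x ∈ ℝ^{ℓ+1} be a column vector with all entries strictly positive such that Mx = λx. Let t be a positive integer and set \overline{y} := Σ_{k=0}^{t−1} \overline{M}^k·\overline{x} ∈ ℝ^ℓ. Then \overline{y} has all entries strictly positive; and if every entry of the last column of the matrix Σ_{k=0}^{t−1} M^k is strictly positive, then \overline{M}·\overline{y} < λ·\overline{y} entrywise. -/

import Mathlib

/-!
Let `M` be nonnegative, `x` positive and `M *ᵥ x ≤ c • x`. Write `A` for the principal submatrix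
`M.submatrix e e`, `x'` for `x ∘ e` and `u k := A ^ k *ᵥ x'`. Since `A *ᵥ x' ≤ c • x'`, always
`u (k + 1) ≤ c • u k`. The entries of `A ^ k` are at most those of `M ^ k`, so if `M ^ k` has a
positive entry in row `e a` and a column deleted in `A`, that entry makes
`u k a < (M ^ k *ᵥ x) (e a) ≤ c ^ k * x (e a) = c ^ k * u 0 a`. Hence `u (j + 1) a < c * u j a` for
some `j < k`, and for `k ≤ t` summing over `j < t` keeps the inequality strict.
-/

section

open Finset Matrix

variable {ι κ R : Type*} [Fintype ι]

section OrderedSemiring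

variable [Semiring R] [PartialOrder R] [IsOrderedRing R]

lemma mulVec_le_mulVec_of_nonneg {m : Type*} {A : Matrix m ι R} (hA : ∀ i j, 0 ≤ A i j)
    {v w : ι → R} (hvw : v ≤ w) : A *ᵥ v ≤ A *ᵥ w :=
  fun i ↦ dotProduct_le_dotProduct_of_nonneg_left hvw (hA i)

variable [Fintype κ] {e : κ → ι} {M : Matrix ι ι R}

lemma dotProduct_comp_le_of_injective (he : e.Injective) {v w : ι → R}
    (hv : 0 ≤ v) (hw : 0 ≤ w) : (v ∘ e) ⬝ᵥ (w ∘ e) ≤ v ⬝ᵥ w :=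
  calc (v ∘ e) ⬝ᵥ (w ∘ e) = ∑ i ∈ univ.map ⟨e, he⟩, v i * w i :=
        (sum_map univ ⟨e, he⟩ fun i ↦ v i * w i).symm
    _ ≤ v ⬝ᵥ w := sum_le_univ_sum_of_nonneg fun i ↦ mul_nonneg (hv i) (hw i)

lemma submatrix_mulVec_comp_le_smul (he : e.Injective) (hM : ∀ i j, 0 ≤ M i j) {x : ι → R}
    (hx : 0 ≤ x) {c : R} (hMx : M *ᵥ x ≤ c • x) : M.submatrix e e *ᵥ (x ∘ e) ≤ c • (x ∘ e) :=
  fun a ↦ (dotProduct_comp_le_of_injective he (hM (e a)) hx).trans (hMx (e a))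

lemma submatrix_pow_apply_le [DecidableEq ι] [DecidableEq κ] (he : e.Injective)
    (hM : ∀ i j, 0 ≤ M i j) (k : ℕ) (a b : κ) :
    (M.submatrix e e ^ k) a b ≤ (M ^ k) (e a) (e b) := by
  induction k generalizing a with
  | zero => simp [one_apply, he.eq_iff]
  | succ k ih =>
    rw [pow_succ', pow_succ', mul_apply', mul_apply']
    calc (M.submatrix e e) a ⬝ᵥ (fun d ↦ (M.submatrix e e ^ k) d b)
        ≤ (M (e a) ∘ e) ⬝ᵥ ((fun i ↦ (M ^ k) i (e b)) ∘ e) :=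
          dotProduct_le_dotProduct_of_nonneg_left ih fun d ↦ hM (e a) (e d)
      _ ≤ M (e a) ⬝ᵥ fun i ↦ (M ^ k) i (e b) :=
          dotProduct_comp_le_of_injective he (hM (e a)) fun i ↦ pow_apply_nonneg hM k i (e b)

end OrderedSemiring

section OrderedCommSemiring

variable [DecidableEq ι] [CommSemiring R] [PartialOrder R] [IsOrderedRing R] {A : Matrix ι ι R}
  {c : R} {x : ι → R}

lemma pow_succ_mulVec_le_smul (hA : ∀ i j, 0 ≤ A i j) (hAx : A *ᵥ x ≤ c • x) (k : ℕ) :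
    A ^ (k + 1) *ᵥ x ≤ c • A ^ k *ᵥ x := by
  rw [pow_succ, ← mulVec_mulVec, ← mulVec_smul]
  exact mulVec_le_mulVec_of_nonneg (pow_apply_nonneg hA k) hAx

lemma pow_mulVec_le_pow_smul (hA : ∀ i j, 0 ≤ A i j) (hc : 0 ≤ c) (hAx : A *ᵥ x ≤ c • x)
    (k : ℕ) : A ^ k *ᵥ x ≤ c ^ k • x := by
  induction k with
  | zero => simp
  | succ k ih =>
    calc A ^ (k + 1) *ᵥ x ≤ c • A ^ k *ᵥ x := pow_succ_mulVec_le_smul hA hAx k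
      _ ≤ c • c ^ k • x := smul_le_smul_of_nonneg_left ih hc
      _ = c ^ (k + 1) • x := by rw [smul_smul, pow_succ']

end OrderedCommSemiring

section StrictOrderedSemiring

variable [Semiring R] [PartialOrder R] [IsStrictOrderedRing R]

lemma sum_pow_mulVec_pos [DecidableEq ι] {A : Matrix ι ι R} (hA : ∀ i j, 0 ≤ A i j) {x : ι → R}
    (hx : ∀ i, 0 < x i) {t : ℕ} (ht : 0 < t) (i : ι) : 0 < (∑ k ∈ range t, A ^ k *ᵥ x) i := by
  rw [Finset.sum_apply]
  exact sum_pos'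
    (fun k _ ↦ dotProduct_nonneg_of_nonneg (pow_apply_nonneg hA k i) fun j ↦ (hx j).le)
    ⟨0, mem_range.2 ht, by simpa using hx i⟩

variable [Fintype κ] {e : κ → ι}

lemma dotProduct_comp_lt_of_injective (he : e.Injective) {v w : ι → R}
    (hv : 0 ≤ v) (hw : 0 ≤ w) {j : ι} (hj : j ∉ Set.range e) (hvj : 0 < v j) (hwj : 0 < w j) :
    (v ∘ e) ⬝ᵥ (w ∘ e) < v ⬝ᵥ w :=
  calc (v ∘ e) ⬝ᵥ (w ∘ e) = ∑ i ∈ univ.map ⟨e, he⟩, v i * w i :=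
        (sum_map univ ⟨e, he⟩ fun i ↦ v i * w i).symm
    _ < v ⬝ᵥ w := sum_lt_sum_of_subset (subset_univ _) (mem_univ j) (by simpa using hj)
      (mul_pos hvj hwj) fun i _ _ ↦ mul_nonneg (hv i) (hw i)

lemma submatrix_pow_mulVec_comp_lt [DecidableEq ι] [DecidableEq κ] (he : e.Injective)
    {M : Matrix ι ι R} (hM : ∀ i j, 0 ≤ M i j) {x : ι → R} (hx : 0 ≤ x)
    {j : ι} (hj : j ∉ Set.range e) (hxj : 0 < x j) {k : ℕ} {a : κ} (hk : 0 < (M ^ k) (e a) j) :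
    (M.submatrix e e ^ k *ᵥ (x ∘ e)) a < (M ^ k *ᵥ x) (e a) :=
  calc (M.submatrix e e ^ k *ᵥ (x ∘ e)) a ≤ ((M ^ k) (e a) ∘ e) ⬝ᵥ (x ∘ e) :=
        dotProduct_le_dotProduct_of_nonneg_right (submatrix_pow_apply_le he hM k a)
          fun b ↦ hx (e b)
    _ < (M ^ k *ᵥ x) (e a) :=
        dotProduct_comp_lt_of_injective he (pow_apply_nonneg hM k (e a)) hx hj hk hxj

end StrictOrderedSemiring

section LinearOrderedSemiring

variable [Semiring R] [LinearOrder R] [IsOrderedRing R]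

lemma exists_succ_lt_mul_of_lt_pow_mul {u : ℕ → R} {c : R} (hc : 0 ≤ c) {k : ℕ}
    (h : u k < c ^ k * u 0) : ∃ j < k, u (j + 1) < c * u j := by
  by_contra! hu
  exact h.not_ge <| (monotone_mul_left_of_nonneg hc).seq_le_seq k (x := fun n ↦ c ^ n * u 0)
    (by simp) (fun n _ ↦ by rw [pow_succ', mul_assoc]) hu

lemma exists_lt_pow_apply_pos_of_sum_pow_apply_pos [DecidableEq ι] {A : Matrix ι ι R}
    {t : ℕ} {i j : ι} (h : 0 < (∑ k ∈ range t, A ^ k) i j) : ∃ k < t, 0 < (A ^ k) i j := by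
  contrapose! h
  rw [Matrix.sum_apply]
  exact sum_nonpos fun k hk ↦ h k (mem_range.1 hk)

end LinearOrderedSemiring

section LinearOrderedCommSemiring

variable [DecidableEq ι] [CommSemiring R] [LinearOrder R] [IsStrictOrderedRing R] {c : R}
  {x : ι → R}

lemma mulVec_sum_pow_mulVec_lt {A : Matrix ι ι R} (hA : ∀ i j, 0 ≤ A i j) (hc : 0 ≤ c)
    (hAx : A *ᵥ x ≤ c • x) {k t : ℕ} (hkt : k ≤ t) {i : ι} (hi : (A ^ k *ᵥ x) i < c ^ k * x i) :
    (A *ᵥ ∑ k ∈ range t, A ^ k *ᵥ x) i < c * (∑ k ∈ range t, A ^ k *ᵥ x) i := by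
  obtain ⟨j, hjk, hj⟩ :=
    exists_succ_lt_mul_of_lt_pow_mul (u := fun n ↦ (A ^ n *ᵥ x) i) hc (by simpa using hi)
  simp only [mulVec_sum, mulVec_mulVec, ← pow_succ', Finset.sum_apply, mul_sum]
  exact sum_lt_sum (fun n _ ↦ pow_succ_mulVec_le_smul hA hAx n i)
    ⟨j, mem_range.2 (hjk.trans_le hkt), hj⟩

theorem stmt8_general [Fintype κ] [DecidableEq κ] {e : κ → ι} (he : e.Injective)
    {M : Matrix ι ι R} (hM : ∀ i j, 0 ≤ M i j) (hx : ∀ i, 0 < x i) (hMx : M *ᵥ x ≤ c • x)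
    {t : ℕ} {y : κ → R} (hy : y = ∑ k ∈ range t, M.submatrix e e ^ k *ᵥ (x ∘ e)) :
    (0 < t → ∀ a, 0 < y a) ∧
      ∀ a, (∃ j ∉ Set.range e, ∃ k ≤ t, 0 < (M ^ k) (e a) j) →
        (M.submatrix e e *ᵥ y) a < c * y a := by
  subst hy
  have hA : ∀ a b, 0 ≤ M.submatrix e e a b := fun a b ↦ hM (e a) (e b)
  have hx' : 0 ≤ x := fun i ↦ (hx i).le
  refine ⟨fun ht ↦ sum_pow_mulVec_pos hA (fun a ↦ hx (e a)) ht, ?_⟩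
  rintro a ⟨j, hj, k, hkt, hk⟩
  have hc : 0 ≤ c :=
    nonneg_of_mul_nonneg_left ((dotProduct_nonneg_of_nonneg (hM j) hx').trans (hMx j)) (hx j)
  refine mulVec_sum_pow_mulVec_lt hA hc (submatrix_mulVec_comp_le_smul he hM hx' hMx) hkt ?_
  exact (submatrix_pow_mulVec_comp_lt he hM hx' hj (hx j) hk).trans_le
    (pow_mulVec_le_pow_smul hM hc hMx k (e a))

end LinearOrderedCommSemiring

end

/-- Proposition 6.6(iii) of the paper. Let `M ∈ ℝ^{(ℓ+1)×(ℓ+1)}`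
be nonnegative, `x > 0` with `Mx = λx`, and let `t > 0`. Set
`\overline{y} := Σ_{k=0}^{t−1} \overline{M}^k·\overline{x}`. Then `\overline{y} > 0`;
and if every entry of the last column of `Σ_{k=0}^{t−1} M^k` is strictly positive,
then `\overline{M}·\overline{y} < λ·\overline{y}` entrywise. -/
theorem stmt8 (ℓ : ℕ) (hℓ : 1 ≤ ℓ) (M : Matrix (Fin (ℓ + 1)) (Fin (ℓ + 1)) ℝ)
    (hM : ∀ i j, 0 ≤ M i j) (lam : ℝ) (x : Fin (ℓ + 1) → ℝ)
    (hx : ∀ i, 0 < x i) (hMx : M.mulVec x = lam • x)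
    (t : ℕ) (ht : 0 < t)
    (y : Fin ℓ → ℝ)
    (hy : y = ∑ k ∈ Finset.range t,
        ((M.submatrix Fin.castSucc Fin.castSucc) ^ k).mulVec (fun j => x j.castSucc)) :
    (∀ i, 0 < y i) ∧
      ((∀ i, 0 < (∑ k ∈ Finset.range t, M ^ k) i (Fin.last ℓ)) →
        ∀ i : Fin ℓ,
          (M.submatrix Fin.castSucc Fin.castSucc).mulVec y i < lam * y i) := by
  obtain ⟨hpos, hlt⟩ := stmt8_general (Fin.castSucc_injective ℓ) hM hx hMx.le hy
  exact ⟨hpos ht, fun h i ↦ hlt i ⟨Fin.last ℓ, by simp,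
    (exists_lt_pow_apply_pos_of_sum_pow_apply_pos (h i.castSucc)).imp
      fun _ ↦ And.imp_left le_of_lt⟩⟩
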